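/- Let (R, m, k) be a Cohen–Macaulay commutative Noetherian local ring of dimension d with minimal multiplicity, i.e., there exists an R-regular sequence x₁, …, x_d ∈ m with m² = (x₁, …, x_d)m. Let f₁, …, f_c ∈ m be an R-regular sequence and set S = R/(f₁, …, f_c). Let M be a finitely generated S-module and set i₀ = dim(S) − depth_S(M). Then M is (d + c + i₀ + 2)-Tor-rigid over S: for every finitely generated S-module N, if Tor_i^S(M, N) = 0 for all n ≤ i ≤ n + d + c + i₀ + 1 for some n ≥ 1, then Tor_i^S(M, N) = 0 for all i ≥ n. -/

import Mathlib

open CategoryTheory IsLocalRing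

section Prelim

variable (R : Type) [CommRing R]

/-- `Tor_i^R(M, N) = 0`. -/
noncomputable def TorVanish (M N : Type) [AddCommGroup M] [Module R M]
    [AddCommGroup N] [Module R N] (i : ℕ) : Prop :=
  Subsingleton (((Tor (ModuleCat R) i).obj (ModuleCat.of R M)).obj (ModuleCat.of R N))

/-- `Ext_R^i(M, N) = 0`. -/
noncomputable def ExtVanish (M N : Type) [AddCommGroup M] [Module R M]
    [AddCommGroup N] [Module R N] (i : ℕ) : Prop :=
  Subsingleton (((Ext R (ModuleCat R) i).obj (Opposite.op (ModuleCat.of R M))).obj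
    (ModuleCat.of R N))

/-- `pd_R M < n`, expressed by the standard characterization
`Ext_R^i(M, -) = 0` for all `i ≥ n`. -/
def ProjDimLT (M : Type) [AddCommGroup M] [Module R M] (n : ℕ) : Prop :=
  ∀ (N : ModuleCat R) (i : ℕ), n ≤ i → ExtVanish R M N i

/-- `pd_R M < ∞`. -/
def ProjDimFinite (M : Type) [AddCommGroup M] [Module R M] : Prop :=
  ∃ n, ProjDimLT R M n

/-- `id_R M < n`, expressed by the standard characterization
`Ext_R^i(-, M) = 0` for all `i ≥ n`. -/
def InjDimLT (M : Type) [AddCommGroup M] [Module R M] (n : ℕ) : Prop :=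
  ∀ (N : ModuleCat R) (i : ℕ), n ≤ i → ExtVanish R N M i

/-- `id_R M < ∞`. -/
def InjDimFinite (M : Type) [AddCommGroup M] [Module R M] : Prop :=
  ∃ n, InjDimLT R M n

/-- `M` is a Tor-rigid `R`-module. -/
def TorRigid (M : Type) [AddCommGroup M] [Module R M] : Prop :=
  ∀ (N : ModuleCat R), Module.Finite R N → ∀ n : ℕ, 1 ≤ n → TorVanish R M N n →
    ∀ i : ℕ, n ≤ i → TorVanish R M N i

variable [IsLocalRing R]

/-- The depth of `M`: the supremum of lengths of `M`-regular sequences contained in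
the maximal ideal. -/
noncomputable def depth (M : Type) [AddCommGroup M] [Module R M] : ℕ∞ :=
  sSup {n : ℕ∞ | ∃ rs : List R, (∀ x ∈ rs, x ∈ maximalIdeal R) ∧
    RingTheory.Sequence.IsRegular M rs ∧ (rs.length : ℕ∞) = n}

/-- The dimension of a module, i.e. the Krull dimension of `R ⧸ ann M`. -/
noncomputable def moduleDim (M : Type) [AddCommGroup M] [Module R M] : WithBot ℕ∞ :=
  ringKrullDim (R ⧸ Module.annihilator R M)

/-- `M` is an Ulrich `R`-module of dimension `s` : `M` is nonzero, Cohen–Macaulay of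
dimension `s`, and there is an `M`-regular sequence `x₁, …, x_s` in the maximal ideal
with `mM = (x₁, …, x_s)M`. -/
def IsUlrich (M : Type) [AddCommGroup M] [Module R M] (s : ℕ) : Prop :=
  Nontrivial M ∧ moduleDim R M = (s : ℕ∞) ∧ depth R M = (s : ℕ∞) ∧
  ∃ rs : List R, rs.length = s ∧ (∀ x ∈ rs, x ∈ maximalIdeal R) ∧
    RingTheory.Sequence.IsRegular M rs ∧
    (maximalIdeal R) • (⊤ : Submodule R M) = (Ideal.ofList rs) • ⊤

/-- `R` is a regular local ring: the maximal ideal is generated by `dim R` elements. -/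
def IsRegularLocal : Prop :=
  ∃ s : Finset R, Ideal.span (s : Set R) = maximalIdeal R ∧
    (s.card : WithBot ℕ∞) = ringKrullDim R

/-- `R` (of dimension `d`) has minimal multiplicity: there is an `R`-regular sequence
`x₁, …, x_d` in the maximal ideal `m` with `m² = (x₁, …, x_d)m`. -/
def HasMinimalMultiplicity (d : ℕ) : Prop :=
  ∃ rs : List R, rs.length = d ∧ (∀ x ∈ rs, x ∈ maximalIdeal R) ∧
    RingTheory.Sequence.IsWeaklyRegular R rs ∧
    maximalIdeal R ^ 2 = Ideal.ofList rs * maximalIdeal R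

/-- The `n`-th Betti number of `M` over the local ring `R`, i.e. the dimension over the
residue field `k = R ⧸ m` of `Tor_n^R(M, k)` (which is an `m`-torsion module, so we take
the dimension of its reduction mod `m`). -/
noncomputable def betti (M : Type) [AddCommGroup M] [Module R M] (n : ℕ) : ℕ :=
  Module.finrank (R ⧸ maximalIdeal R)
    ((((Tor (ModuleCat R) n).obj (ModuleCat.of R M)).obj
        (ModuleCat.of R (R ⧸ maximalIdeal R))) ⧸
      (maximalIdeal R • (⊤ : Submodule R
        (((Tor (ModuleCat R) n).obj (ModuleCat.of R M)).obj
          (ModuleCat.of R (R ⧸ maximalIdeal R))))))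

end Prelim

/-!
Let `I = (x₁, …, x_d)` be the ideal with `m² = I m` and put `X = R ⧸ I`, a module of flat dimension
at most `d`. As `m² ⊆ I`, a sequence in `m` acts nilpotently on `X`, so `Tor_i(X, M) = 0` for
`i > d - depth M`. Hence for a high syzygy `Z` of `M`, with minimal cover `F → Z` and kernel
`W ⊆ m F`, the module `X ⊗ W` embeds in `X ⊗ F`, where its image is killed by `m`: it is a vector
space over `k`, nonzero unless `W = 0`. Vanishing of `d + 1` consecutive `Tor_i(W, N)` gives
`Tor_j(X ⊗ W, N) = 0` for some `j` by dimension shifting along a resolution of `X`, hence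
`Tor_j(k, N) = 0`, so that `N` has finite flat dimension and all later `Tor` vanish.

One passes between `R` and a deformation `S` one element at a time: when `S = R ⧸ (f)`, there is a
short exact sequence `0 → N → S ⊗ Ω_R N → Ω_S N → 0`, and `Tor_i^S(M, S ⊗ Ω_R N)` is
`Tor_i^R(M, Ω_R N)`. Each element costs one degree of the vanishing interval.
-/

universe u

open TensorProduct

section ShortExact

section Semiring

variable {R : Type*} [CommSemiring R] {A B X Y : Type*}
  [AddCommMonoid A] [Module R A] [AddCommMonoid B] [Module R B]
  [AddCommMonoid X] [Module R X] [AddCommMonoid Y] [Module R Y]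

theorem rTensor_comp_lTensor_comm (f : A →ₗ[R] B) (p : X →ₗ[R] Y) :
    f.rTensor Y ∘ₗ p.lTensor A = p.lTensor B ∘ₗ f.rTensor X := by
  rw [LinearMap.rTensor_comp_lTensor, LinearMap.lTensor_comp_rTensor]

theorem rTensor_lTensor_apply_comm (f : A →ₗ[R] B) (p : X →ₗ[R] Y) (z : A ⊗[R] X) :
    f.rTensor Y (p.lTensor A z) = p.lTensor B (f.rTensor X z) :=
  LinearMap.congr_fun (rTensor_comp_lTensor_comm f p) z

theorem rTensor_injective_of_lTensor_injective {f : A →ₗ[R] B} {p : X →ₗ[R] Y}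
    (hY : Function.Injective (f.rTensor Y)) (hA : Function.Injective (p.lTensor A)) :
    Function.Injective (f.rTensor X) := by
  have h : Function.Injective (f.rTensor Y ∘ₗ p.lTensor A) := hY.comp hA
  rw [rTensor_comp_lTensor_comm] at h
  exact Function.Injective.of_comp h

theorem lTensor_injective_of_rTensor_injective {f : A →ₗ[R] B} {p : X →ₗ[R] Y}
    (hB : Function.Injective (p.lTensor B)) (hX : Function.Injective (f.rTensor X)) :
    Function.Injective (p.lTensor A) := by
  have h : Function.Injective (p.lTensor B ∘ₗ f.rTensor X) := hB.comp hX
  rw [← rTensor_comp_lTensor_comm] at h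
  exact Function.Injective.of_comp h

end Semiring

variable {R : Type*} [CommRing R] {A B C X Y Z : Type*}
  [AddCommGroup A] [Module R A] [AddCommGroup B] [Module R B] [AddCommGroup C] [Module R C]
  [AddCommGroup X] [Module R X] [AddCommGroup Y] [Module R Y] [AddCommGroup Z] [Module R Z]

/-- `0 → A → B → C → 0` is a short exact sequence, for linear maps `f : A → B` and `g : B → C`. -/
structure IsShortExact (f : A →ₗ[R] B) (g : B →ₗ[R] C) : Prop where
  injective : Function.Injective f
  exact : Function.Exact f g
  surjective : Function.Surjective g

theorem isShortExact_subtype_ker {g : B →ₗ[R] C} (hg : Function.Surjective g) :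
    IsShortExact (LinearMap.ker g).subtype g :=
  ⟨Subtype.val_injective, LinearMap.exact_subtype_ker_map g, hg⟩

namespace IsShortExact

variable {f : A →ₗ[R] B} {g : B →ₗ[R] C} {p : X →ₗ[R] Y} {q : Y →ₗ[R] Z}

theorem lTensor_injective_right (hf : IsShortExact f g) (hp : IsShortExact p q)
    (hB : Function.Injective (p.lTensor B)) (hZ : Function.Injective (f.rTensor Z)) :
    Function.Injective (p.lTensor C) :=
  lTensor_injective_of_exact_of_exact_of_rTensor_injective hf.exact hf.surjective
    hp.exact hp.surjective hZ hB

theorem rTensor_injective_right (hf : IsShortExact f g) (hp : IsShortExact p q)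
    (hY : Function.Injective (f.rTensor Y)) (hC : Function.Injective (p.lTensor C)) :
    Function.Injective (f.rTensor Z) := by
  rw [← LinearMap.lTensor_inj_iff_rTensor_inj] at hY ⊢
  rw [LinearMap.lTensor_inj_iff_rTensor_inj] at hC
  exact hp.lTensor_injective_right hf hY hC

theorem lTensor_injective_middle (hf : IsShortExact f g) (hY : Function.Injective (f.rTensor Y))
    (hA : Function.Injective (p.lTensor A)) (hC : Function.Injective (p.lTensor C)) :
    Function.Injective (p.lTensor B) := by
  rw [injective_iff_map_eq_zero]
  intro b hb
  have hgb : g.rTensor X b = 0 := hC (by rw [← rTensor_lTensor_apply_comm, hb, map_zero, map_zero])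
  obtain ⟨a, rfl⟩ := (rTensor_exact X hf.exact hf.surjective b).1 hgb
  have ha : a = 0 := hA (hY (by rw [rTensor_lTensor_apply_comm, hb, map_zero, map_zero]))
  rw [ha, map_zero]

end IsShortExact

end ShortExact

section Syzygy

variable (R : Type u) [CommRing R] (N : Type u) [AddCommGroup N] [Module R N]

/-- The free module on the elements of `N`, which canonically surjects onto `N`. -/
def FreeCover : Type u :=
  N →₀ R

noncomputable instance : AddCommGroup (FreeCover R N) :=
  inferInstanceAs (AddCommGroup (N →₀ R))

noncomputable instance : Module R (FreeCover R N) :=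
  inferInstanceAs (Module R (N →₀ R))

instance : Module.Free R (FreeCover R N) :=
  inferInstanceAs (Module.Free R (N →₀ R))

/-- The canonical surjection from the free cover of `N` onto `N`. -/
noncomputable def FreeCover.proj : FreeCover R N →ₗ[R] N :=
  Finsupp.linearCombination R id

/-- The first syzygy of `N`, taken with respect to its canonical free cover. -/
def Syzygy : Type u :=
  LinearMap.ker (FreeCover.proj R N)

noncomputable instance : AddCommGroup (Syzygy R N) :=
  inferInstanceAs (AddCommGroup (LinearMap.ker (FreeCover.proj R N)))

noncomputable instance : Module R (Syzygy R N) :=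
  inferInstanceAs (Module R (LinearMap.ker (FreeCover.proj R N)))

/-- The inclusion of the first syzygy of `N` into the free cover of `N`. -/
noncomputable def Syzygy.incl : Syzygy R N →ₗ[R] FreeCover R N :=
  (LinearMap.ker (FreeCover.proj R N)).subtype

theorem isShortExact_freeCover : IsShortExact (Syzygy.incl R N) (FreeCover.proj R N) :=
  isShortExact_subtype_ker (Finsupp.linearCombination_id_surjective R N)

end Syzygy

/-- `TorSuccVanish R M N i` says that `Tor_{i+1}^R(M, N) = 0`. The index is shifted because
`Tor_1` is the first `Tor` detected by injectivity, namely of `M ⊗ ΩN → M ⊗ F` for a free cover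
`F → N` with kernel `ΩN`; the higher ones follow from `Tor_{i+1}(M, N) = Tor_i(M, ΩN)`. -/
def TorSuccVanish (R : Type u) [CommRing R] (M : Type u) [AddCommGroup M] [Module R M] :
    ∀ (N : Type u) [AddCommGroup N] [Module R N], ℕ → Prop
  | N, _, _, 0 => Function.Injective ((Syzygy.incl R N).lTensor M)
  | N, _, _, i + 1 => TorSuccVanish R M (Syzygy R N) i

namespace TorSuccVanish

variable {R : Type u} [CommRing R]
  {A : Type u} [AddCommGroup A] [Module R A] {B : Type u} [AddCommGroup B] [Module R B]
  {C : Type u} [AddCommGroup C] [Module R C] {M : Type u} [AddCommGroup M] [Module R M]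
  {N : Type u} [AddCommGroup N] [Module R N] {X : Type u} [AddCommGroup X] [Module R X]
  {Y : Type u} [AddCommGroup Y] [Module R Y] {Z : Type u} [AddCommGroup Z] [Module R Z]

theorem zero_iff : TorSuccVanish R M N 0 ↔ Function.Injective ((Syzygy.incl R N).lTensor M) :=
  Iff.rfl

theorem zero_iff_lTensor_injective [Module.Flat R Y] {p : X →ₗ[R] Y} {q : Y →ₗ[R] Z}
    (hp : IsShortExact p q) : TorSuccVanish R M Z 0 ↔ Function.Injective (p.lTensor M) := by
  have hM := isShortExact_freeCover R M
  have hZ := isShortExact_freeCover R Z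
  constructor
  · intro h
    refine hM.lTensor_injective_right hp
      (Module.Flat.lTensor_preserves_injective_linearMap _ hp.injective) ?_
    exact hM.rTensor_injective_right hZ
      (Module.Flat.rTensor_preserves_injective_linearMap _ hM.injective) h
  · intro h
    refine hM.lTensor_injective_right hZ
      (Module.Flat.lTensor_preserves_injective_linearMap _ hZ.injective) ?_
    exact hM.rTensor_injective_right hp
      (Module.Flat.rTensor_preserves_injective_linearMap _ hM.injective) h

theorem zero_iff_rTensor_injective [Module.Flat R B] {f : A →ₗ[R] B} {g : B →ₗ[R] C}
    (hf : IsShortExact f g) : TorSuccVanish R C N 0 ↔ Function.Injective (f.rTensor N) := by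
  have hN := isShortExact_freeCover R N
  constructor
  · exact hf.rTensor_injective_right hN
      (Module.Flat.rTensor_preserves_injective_linearMap _ hf.injective)
  · exact hf.lTensor_injective_right hN
      (Module.Flat.lTensor_preserves_injective_linearMap _ hN.injective)

theorem zero_comm : TorSuccVanish R M N 0 ↔ TorSuccVanish R N M 0 := by
  have hM := isShortExact_freeCover R M
  rw [zero_iff_rTensor_injective hM, zero_iff_lTensor_injective hM,
    LinearMap.lTensor_inj_iff_rTensor_inj]

theorem one_iff_zero [Module.Flat R Y] [Module.Flat R B] {f : A →ₗ[R] B} {g : B →ₗ[R] C}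
    {p : X →ₗ[R] Y} {q : Y →ₗ[R] Z} (hf : IsShortExact f g) (hp : IsShortExact p q) :
    TorSuccVanish R C X 0 ↔ TorSuccVanish R A Z 0 := by
  rw [zero_iff_rTensor_injective hf, zero_iff_lTensor_injective hp]
  exact ⟨lTensor_injective_of_rTensor_injective
      (Module.Flat.lTensor_preserves_injective_linearMap p hp.injective),
    rTensor_injective_of_lTensor_injective
      (Module.Flat.rTensor_preserves_injective_linearMap f hf.injective)⟩

theorem succ_iff_left [Module.Flat R B] {f : A →ₗ[R] B} {g : B →ₗ[R] C}
    (hf : IsShortExact f g) (i : ℕ) : TorSuccVanish R C N (i + 1) ↔ TorSuccVanish R A N i := by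
  induction i generalizing N with
  | zero => exact one_iff_zero hf (isShortExact_freeCover R N)
  | succ _ ih => exact ih (N := Syzygy R N)

theorem succ_iff_right [Module.Flat R Y] {p : X →ₗ[R] Y} {q : Y →ₗ[R] Z}
    (hp : IsShortExact p q) (i : ℕ) : TorSuccVanish R M Z (i + 1) ↔ TorSuccVanish R M X i := by
  induction i generalizing M with
  | zero =>
    have hM := isShortExact_freeCover R M
    rw [succ_iff_left hM, one_iff_zero hM hp]
  | succ i ih =>
    have hM := isShortExact_freeCover R M
    rw [succ_iff_left hM, ih, succ_iff_left hM]

protected theorem comm {i : ℕ} : TorSuccVanish R M N i ↔ TorSuccVanish R N M i := by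
  induction i generalizing M with
  | zero => exact zero_comm
  | succ i ih =>
    rw [succ_iff_left (isShortExact_freeCover R M), ih, succ_iff_right (isShortExact_freeCover R M)]

theorem of_flat_left [Module.Flat R M] (i : ℕ) : TorSuccVanish R M N i := by
  induction i generalizing N with
  | zero =>
    exact Module.Flat.lTensor_preserves_injective_linearMap _
      (isShortExact_freeCover R N).injective
  | succ _ ih => exact ih

theorem flat_of_forall_zero
    (h : ∀ (Y : Type u) [AddCommGroup Y] [Module R Y], TorSuccVanish R Y M 0) :
    Module.Flat R M := by
  rw [Module.Flat.iff_lTensor_injective']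
  intro I
  have hI : IsShortExact I.subtype I.mkQ :=
    ⟨Subtype.val_injective, LinearMap.exact_subtype_mkQ I, I.mkQ_surjective⟩
  exact (zero_iff_lTensor_injective hI).1 (zero_comm.1 (h (R ⧸ I)))

theorem of_leftInverse {s : M →ₗ[R] X} {r : X →ₗ[R] M} (h : Function.LeftInverse r s) {i : ℕ}
    (hX : TorSuccVanish R X N i) : TorSuccVanish R M N i := by
  induction i generalizing N with
  | succ i ih => exact ih hX
  | zero =>
    have hs : Function.LeftInverse (r.rTensor (Syzygy R N)) (s.rTensor (Syzygy R N)) := by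
      intro z
      rw [← LinearMap.comp_apply, ← LinearMap.rTensor_comp, LinearMap.ext (f := r ∘ₗ s)
        (g := LinearMap.id) h, LinearMap.rTensor_id, LinearMap.id_apply]
    rw [zero_iff] at hX ⊢
    exact lTensor_injective_of_rTensor_injective hX hs.injective

theorem congr_left (e : M ≃ₗ[R] X) {i : ℕ} : TorSuccVanish R M N i ↔ TorSuccVanish R X N i :=
  ⟨of_leftInverse (s := e.symm.toLinearMap) (r := e.toLinearMap) e.apply_symm_apply,
    of_leftInverse (s := e.toLinearMap) (r := e.symm.toLinearMap) e.symm_apply_apply⟩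

theorem congr_right (e : N ≃ₗ[R] X) {i : ℕ} : TorSuccVanish R M N i ↔ TorSuccVanish R M X i := by
  rw [TorSuccVanish.comm, congr_left e, TorSuccVanish.comm]

section ThreeTerm

variable {f : A →ₗ[R] B} {g : B →ₗ[R] C} {i : ℕ}

theorem rTensor_injective (hf : IsShortExact f g) (h : TorSuccVanish R C N 0) :
    Function.Injective (f.rTensor N) :=
  hf.rTensor_injective_right (isShortExact_freeCover R N)
    (Module.Flat.rTensor_preserves_injective_linearMap f hf.injective) h

theorem zero_of_rTensor_injective (hf : IsShortExact f g) (hB : TorSuccVanish R B N 0)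
    (h : Function.Injective (f.rTensor N)) : TorSuccVanish R C N 0 :=
  hf.lTensor_injective_right (isShortExact_freeCover R N) hB h

theorem extension_left (hf : IsShortExact f g) (hA : TorSuccVanish R A N i)
    (hC : TorSuccVanish R C N i) : TorSuccVanish R B N i := by
  induction i generalizing N with
  | succ i ih => exact ih hA hC
  | zero =>
    rw [zero_iff] at hA hC ⊢
    exact hf.lTensor_injective_middle
      (Module.Flat.rTensor_preserves_injective_linearMap f hf.injective) hA hC

theorem cokernel_left (hf : IsShortExact f g) (hB : TorSuccVanish R B N (i + 1))
    (hA : TorSuccVanish R A N i) : TorSuccVanish R C N (i + 1) := by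
  induction i generalizing N with
  | succ i ih => exact ih (N := Syzygy R N) hB hA
  | zero =>
    rw [zero_iff] at hA
    exact zero_of_rTensor_injective (N := Syzygy R N) hf hB
      (rTensor_injective_of_lTensor_injective
        (Module.Flat.rTensor_preserves_injective_linearMap f hf.injective) hA)

theorem extension_right (hf : IsShortExact f g) (hA : TorSuccVanish R M A i)
    (hC : TorSuccVanish R M C i) : TorSuccVanish R M B i := by
  rw [TorSuccVanish.comm] at *
  exact extension_left hf hA hC

theorem cokernel_right (hf : IsShortExact f g) (hB : TorSuccVanish R M B (i + 1))
    (hA : TorSuccVanish R M A i) : TorSuccVanish R M C (i + 1) := by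
  rw [TorSuccVanish.comm] at *
  exact cokernel_left hf hB hA

end ThreeTerm

end TorSuccVanish

section Comparison

variable {R : Type u} [CommRing R]

section

variable {A B C D : Type*} [AddCommGroup A] [Module R A] [AddCommGroup B] [Module R B]
  [AddCommGroup C] [Module R C] [AddCommGroup D] [Module R D] {f : A →ₗ[R] B} {g : B →ₗ[R] C}

theorem exact_comp_iff_injective {h : C →ₗ[R] D} (hfg : Function.Exact f g)
    (hg : Function.Surjective g) : Function.Exact f (h ∘ₗ g) ↔ Function.Injective h := by
  refine ⟨fun hex => ?_, fun hh => hfg.comp_injective h hh (map_zero h)⟩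
  rw [injective_iff_map_eq_zero]
  intro c hc
  obtain ⟨b, rfl⟩ := hg c
  exact (hfg b).2 ((hex b).1 hc)

theorem exists_exact_surjective_subtype_ker_comp_eq {h : C →ₗ[R] D} (hfg : Function.Exact f g)
    (hgh : Function.Exact g h) : ∃ q : B →ₗ[R] LinearMap.ker h,
      Function.Exact f q ∧ Function.Surjective q ∧ (LinearMap.ker h).subtype ∘ₗ q = g := by
  let q : B →ₗ[R] LinearMap.ker h := g.codRestrict _ hgh.apply_apply_eq_zero
  have hq : (LinearMap.ker h).subtype ∘ₗ q = g := rfl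
  refine ⟨q, ?_, ?_, hq⟩
  · rwa [← (Submodule.injective_subtype (LinearMap.ker h)).comp_exact_iff_exact, hq]
  · rintro ⟨x, hx⟩
    obtain ⟨y, rfl⟩ := (hgh x).1 hx
    exact ⟨y, rfl⟩

end

theorem TorSuccVanish.iff_exact_of_flat_resolution {M N : Type u} [AddCommGroup M] [Module R M]
    [AddCommGroup N] [Module R N] (P : ℕ → Type u) [∀ j, AddCommGroup (P j)]
    [∀ j, Module R (P j)] [∀ j, Module.Flat R (P j)] (d : ∀ j, P (j + 1) →ₗ[R] P j)
    (hd : ∀ j, Function.Exact (d (j + 1)) (d j)) {π : P 0 →ₗ[R] N} (hπ : Function.Surjective π)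
    (h0 : Function.Exact (d 0) π) (i : ℕ) :
    TorSuccVanish R M N i ↔ Function.Exact ((d (i + 1)).lTensor M) ((d i).lTensor M) := by
  induction i generalizing P N with
  | zero =>
    obtain ⟨q, hdq, hq, hqd⟩ := exists_exact_surjective_subtype_ker_comp_eq (hd 0) h0
    rw [zero_iff_lTensor_injective (isShortExact_subtype_ker hπ), ← hqd, LinearMap.lTensor_comp]
    exact (exact_comp_iff_injective (lTensor_exact M hdq hq)
      (LinearMap.lTensor_surjective M hq)).symm
  | succ i ih =>
    obtain ⟨q, hdq, hq, -⟩ := exists_exact_surjective_subtype_ker_comp_eq (hd 0) h0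
    rw [succ_iff_right (isShortExact_subtype_ker hπ)]
    exact ih (fun j => P (j + 1)) (fun j => d (j + 1)) (fun j => hd (j + 1)) hq hdq

theorem torVanish_succ_iff {R : Type} [CommRing R] {M N : Type} [AddCommGroup M] [Module R M]
    [AddCommGroup N] [Module R N] {i : ℕ} :
    TorVanish R M N (i + 1) ↔ TorSuccVanish R M N i := by
  let P := projectiveResolution (ModuleCat.of R N)
  have hflat (j : ℕ) : Module.Flat R (P.complex.X j) := by
    have hproj : Projective (P.complex.X j) := P.projective j
    have : Module.Projective R (P.complex.X j) := (IsProjective.iff_projective _).2 hproj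
    infer_instance
  have hexact (j : ℕ) : Function.Exact (P.complex.d (j + 2) (j + 1)).hom
      (P.complex.d (j + 1) j).hom :=
    (ShortComplex.ShortExact.moduleCat_exact_iff_function_exact _).1 (P.exact_succ j)
  let π : P.complex.X 0 ⟶ ModuleCat.of R N := P.π.f 0
  have hepi : Epi (P.π.f 0) := inferInstance
  have hπ : Function.Surjective π.hom := (ModuleCat.epi_iff_surjective π).1 hepi
  have h0 : Function.Exact (P.complex.d 1 0).hom π.hom :=
    (ShortComplex.ShortExact.moduleCat_exact_iff_function_exact _).1
      (ShortComplex.exact_of_g_is_cokernel (ShortComplex.mk _ _ P.complex_d_comp_π_f_zero)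
        P.isColimitCokernelCofork)
  rw [TorSuccVanish.iff_exact_of_flat_resolution (fun j => P.complex.X j)
    (fun j => (P.complex.d (j + 1) j).hom) hexact hπ h0]
  unfold TorVanish
  let F := (MonoidalCategory.tensoringLeft (ModuleCat R)).obj (ModuleCat.of R M)
  rw [← ModuleCat.isZero_iff_subsingleton]
  refine (P.isoLeftDerivedObj F (i + 1)).isZero_iff.trans ?_
  refine (HomologicalComplex.exactAt_iff_isZero_homology _ _).symm.trans ?_
  rw [HomologicalComplex.exactAt_iff' _ (i + 2) (i + 1) i (by simp) (by simp)]
  exact ShortComplex.ShortExact.moduleCat_exact_iff_function_exact _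

end Comparison

section RegularElement

variable {R : Type u} [CommRing R] {M : Type u} [AddCommGroup M] [Module R M]
  {N : Type u} [AddCommGroup N] [Module R N]

open Pointwise in
theorem isShortExact_lsmul_quotSMulTop {y : R} (hy : IsSMulRegular M y) :
    IsShortExact (LinearMap.lsmul R M y)
      ((y • (⊤ : Submodule R M)).mkQ : M →ₗ[R] QuotSMulTop y M) := by
  refine ⟨hy, fun m => ?_, Submodule.mkQ_surjective _⟩
  rw [Submodule.mkQ_apply, Submodule.Quotient.mk_eq_zero, Submodule.mem_smul_pointwise_iff_exists]
  simp only [Submodule.mem_top, true_and, LinearMap.lsmul_apply, Set.mem_range]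

theorem Syzygy.exists_incl_comp_eq {X : Type*} [AddCommGroup X] [Module R X]
    {h : X →ₗ[R] FreeCover R N} (hh : FreeCover.proj R N ∘ₗ h = 0) :
    ∃ k : X →ₗ[R] Syzygy R N, Syzygy.incl R N ∘ₗ k = h :=
  ⟨h.codRestrict (LinearMap.ker (FreeCover.proj R N)) (LinearMap.congr_fun hh), rfl⟩

theorem Syzygy.exists_comp_eq_smul_of_smul_eq_zero {r : R} (hr : ∀ n : N, r • n = 0) :
    ∃ φ : FreeCover R N →ₗ[R] Syzygy R N,
      Syzygy.incl R N ∘ₗ φ = r • LinearMap.id ∧ φ ∘ₗ Syzygy.incl R N = r • LinearMap.id := by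
  have hproj : FreeCover.proj R N ∘ₗ (r • LinearMap.id) = 0 := by
    rw [LinearMap.comp_smul, LinearMap.comp_id]
    exact LinearMap.ext fun x => hr _
  obtain ⟨φ, hφ⟩ := Syzygy.exists_incl_comp_eq hproj
  refine ⟨φ, hφ, ?_⟩
  rw [← LinearMap.cancel_left (isShortExact_freeCover R N).injective, ← LinearMap.comp_assoc, hφ,
    LinearMap.smul_comp, LinearMap.comp_smul, LinearMap.id_comp, LinearMap.comp_id]

variable (R N) in
/-- Multiplication by `r` on the syzygy of `N` factors through its inclusion into the free cover
of `N`. This holds when `r` annihilates `N`, passes to further syzygies, and makes `r` annihilate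
the modules `Tor_i(M, N)` for `i > 0`. -/
def SyzygySMulFactors (r : R) : Prop :=
  ∃ φ : FreeCover R N →ₗ[R] Syzygy R N, φ ∘ₗ Syzygy.incl R N = r • LinearMap.id

namespace SyzygySMulFactors

variable {r : R}

theorem of_smul_eq_zero (hr : ∀ n : N, r • n = 0) : SyzygySMulFactors R N r := by
  obtain ⟨φ, -, hφ⟩ := Syzygy.exists_comp_eq_smul_of_smul_eq_zero hr
  exact ⟨φ, hφ⟩

theorem syzygy (h : SyzygySMulFactors R N r) : SyzygySMulFactors R (Syzygy R N) r := by
  obtain ⟨φ, hφ⟩ := h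
  have hΩ := isShortExact_freeCover R (Syzygy R N)
  obtain ⟨ψ, hψ⟩ := Module.projective_lifting_property (FreeCover.proj R (Syzygy R N)) φ
    hΩ.surjective
  -- `r - ψ ∘ d` maps into the second syzygy, because `φ` is a null-homotopy of `r`
  have hproj : FreeCover.proj R (Syzygy R N) ∘ₗ
      (r • LinearMap.id - ψ ∘ₗ Syzygy.incl R N ∘ₗ FreeCover.proj R (Syzygy R N)) = 0 := by
    rw [LinearMap.comp_sub, ← LinearMap.comp_assoc, hψ, ← LinearMap.comp_assoc, hφ,
      LinearMap.comp_smul, LinearMap.smul_comp, LinearMap.comp_id, LinearMap.id_comp, sub_self]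
  obtain ⟨k, hk⟩ := Syzygy.exists_incl_comp_eq hproj
  refine ⟨k, ?_⟩
  rw [← LinearMap.cancel_left hΩ.injective, ← LinearMap.comp_assoc, hk, LinearMap.sub_comp,
    LinearMap.comp_assoc, LinearMap.comp_assoc, hΩ.exact.linearMap_comp_eq_zero,
    LinearMap.comp_zero, LinearMap.comp_zero, sub_zero, LinearMap.smul_comp, LinearMap.comp_smul,
    LinearMap.id_comp, LinearMap.comp_id]

theorem smul_eq_zero_of_lTensor_incl_eq_zero (h : SyzygySMulFactors R N r)
    {z : M ⊗[R] Syzygy R N} (hz : (Syzygy.incl R N).lTensor M z = 0) : r • z = 0 := by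
  obtain ⟨φ, hφ⟩ := h
  calc r • z = (φ ∘ₗ Syzygy.incl R N).lTensor M z := by
        rw [hφ, LinearMap.lTensor_smul, LinearMap.lTensor_id, LinearMap.smul_apply,
          LinearMap.id_apply]
    _ = 0 := by rw [LinearMap.lTensor_comp, LinearMap.comp_apply, hz, map_zero]

end SyzygySMulFactors

theorem TorSuccVanish.isSMulRegular_tensor {y : R} (hy : IsSMulRegular M y)
    (h : TorSuccVanish R (QuotSMulTop y M) N 0) : IsSMulRegular (M ⊗[R] N) y :=
  rTensor_injective (isShortExact_lsmul_quotSMulTop hy) h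

/-- If `y` is `M`-regular then it is regular on `Tor_{i+1}(M, N)` as soon as
`Tor_{i+2}(M / yM, N) = 0`, so `Tor_{i+1}(M, N)` cannot be annihilated by a power of `y` without
vanishing. -/
theorem TorSuccVanish.of_quotSMulTop {y : R} (hy : IsSMulRegular M y) {k : ℕ}
    (hN : SyzygySMulFactors R N (y ^ k)) {i : ℕ}
    (h : TorSuccVanish R (QuotSMulTop y M) N (i + 1)) : TorSuccVanish R M N i := by
  induction i generalizing N with
  | zero =>
    rw [zero_iff, injective_iff_map_eq_zero]
    intro z hz
    have hreg : IsSMulRegular (M ⊗[R] Syzygy R N) y := isSMulRegular_tensor hy h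
    exact (hreg.pow k).right_eq_zero_of_smul (hN.smul_eq_zero_of_lTensor_incl_eq_zero hz)
  | succ i ih => exact ih hN.syzygy h

end RegularElement

section FlatDimension

/-- The flat dimension of `X` is at most `d`, expressed as `Tor_i(X, Y) = 0` for all `Y` and
`i > d`. -/
def FlatDimLE (R : Type u) [CommRing R] (X : Type u) [AddCommGroup X] [Module R X] (d : ℕ) :
    Prop :=
  ∀ (Y : Type u) [AddCommGroup Y] [Module R Y] (i : ℕ), d ≤ i → TorSuccVanish R X Y i

variable {R : Type u} [CommRing R] {M : Type u} [AddCommGroup M] [Module R M]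
  {N : Type u} [AddCommGroup N] [Module R N] {X : Type u} [AddCommGroup X] [Module R X]
  {Y : Type u} [AddCommGroup Y] [Module R Y] {d : ℕ}

namespace FlatDimLE

theorem of_flat [Module.Flat R X] : FlatDimLE R X 0 :=
  fun _ _ _ i _ => TorSuccVanish.of_flat_left i

theorem flat (h : FlatDimLE R X 0) : Module.Flat R X :=
  TorSuccVanish.flat_of_forall_zero fun Y _ _ => TorSuccVanish.comm.1 (h Y 0 le_rfl)

theorem congr (e : X ≃ₗ[R] Y) (h : FlatDimLE R X d) : FlatDimLE R Y d :=
  fun Z _ _ i hi => (TorSuccVanish.congr_left e).1 (h Z i hi)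

theorem syzygy (h : FlatDimLE R X (d + 1)) : FlatDimLE R (Syzygy R X) d := fun Y _ _ i hi =>
  (TorSuccVanish.succ_iff_left (isShortExact_freeCover R X) i).1 (h Y (i + 1) (by lia))

theorem quotSMulTop {y : R} (hy : IsSMulRegular X y) (h : FlatDimLE R X d) :
    FlatDimLE R (QuotSMulTop y X) (d + 1) := by
  intro Y _ _ i hi
  obtain ⟨i, rfl⟩ := Nat.exists_eq_add_one_of_ne_zero (by lia : i ≠ 0)
  exact TorSuccVanish.cokernel_left (isShortExact_lsmul_quotSMulTop hy) (h Y _ (by lia))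
    (h Y _ (by lia))

open RingTheory.Sequence in
theorem quotient_ofList_smul_top {xs : List R} (hxs : IsWeaklyRegular X xs) (h : FlatDimLE R X d) :
    FlatDimLE R (X ⧸ (Ideal.ofList xs • ⊤ : Submodule R X)) (d + xs.length) := by
  induction xs generalizing X d with
  | nil =>
    have hbot : (Ideal.ofList ([] : List R) • ⊤ : Submodule R X) = ⊥ := by
      rw [Ideal.ofList_nil, Submodule.bot_smul]
    exact h.congr (Submodule.quotEquivOfEqBot _ hbot).symm
  | cons x xs ih =>
    rw [isWeaklyRegular_cons_iff] at hxs
    rw [List.length_cons, add_comm xs.length, ← add_assoc]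
    exact (ih hxs.2 (h.quotSMulTop hxs.1)).congr
      (Submodule.quotOfListConsSMulTopEquivQuotSMulTopInner X x xs).symm

open RingTheory.Sequence in
theorem quotient_ofList {xs : List R} (hxs : IsWeaklyRegular R xs) :
    FlatDimLE R (R ⧸ Ideal.ofList xs) xs.length := by
  have h := quotient_ofList_smul_top hxs of_flat
  rw [zero_add] at h
  refine h.congr (Submodule.quotEquivOfEq _ _ ?_)
  rw [smul_eq_mul, Ideal.mul_top]

end FlatDimLE

open RingTheory.Sequence in
theorem TorSuccVanish.of_isWeaklyRegular {ys : List R} (hM : IsWeaklyRegular M ys) {k : ℕ}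
    (hys : ∀ y ∈ ys, ∀ x : X, y ^ k • x = 0) (hX : FlatDimLE R X d) {i : ℕ}
    (hi : d ≤ i + ys.length) : TorSuccVanish R M X i := by
  induction ys generalizing M i with
  | nil => exact TorSuccVanish.comm.1 (hX M i hi)
  | cons y ys ih =>
    rw [isWeaklyRegular_cons_iff] at hM
    rw [List.forall_mem_cons] at hys
    rw [List.length_cons] at hi
    exact of_quotSMulTop hM.1 (SyzygySMulFactors.of_smul_eq_zero hys.1)
      (ih hM.2 hys.2 (by lia))

theorem TorSuccVanish.tensor_of_flat [Module.Flat R X] {i : ℕ} (h : TorSuccVanish R M N i) :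
    TorSuccVanish R (X ⊗[R] M) N i := by
  induction i generalizing N with
  | succ i ih => exact ih h
  | zero =>
    rw [zero_iff] at h ⊢
    rw [LinearMap.lTensor_tensor]
    exact (TensorProduct.assoc R X M _).symm.injective.comp
      ((Module.Flat.lTensor_preserves_injective_linearMap _ h).comp
        (TensorProduct.assoc R X M _).injective)

/-- Dévissage along the syzygies of `X`: if `Tor(X, W)` vanishes, tensoring them with `W` preserves
exactness. -/
theorem TorSuccVanish.tensor_of_flatDimLE {W : Type u} [AddCommGroup W] [Module R W]
    (hX : FlatDimLE R X d) (hXW : ∀ i, TorSuccVanish R X W i) {a : ℕ}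
    (hW : ∀ i, a ≤ i → i ≤ a + d → TorSuccVanish R W N i) :
    TorSuccVanish R (X ⊗[R] W) N (a + d) := by
  induction d generalizing X with
  | zero =>
    have := hX.flat
    exact tensor_of_flat (hW a le_rfl le_rfl)
  | succ d ih =>
    have hs := isShortExact_freeCover R X
    have hsW : IsShortExact ((Syzygy.incl R X).rTensor W) ((FreeCover.proj R X).rTensor W) :=
      ⟨rTensor_injective hs (hXW 0), rTensor_exact W hs.exact hs.surjective,
        LinearMap.rTensor_surjective W hs.surjective⟩
    refine cokernel_left hsW (tensor_of_flat (hW _ (by lia) le_rfl)) (ih hX.syzygy ?_ ?_)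
    · exact fun i => (succ_iff_left hs i).1 (hXW (i + 1))
    · exact fun i hai hid => hW i hai (by lia)

end FlatDimension

section LocalRing

variable {R : Type u} [CommRing R] {M : Type u} [AddCommGroup M] [Module R M]
  {N : Type u} [AddCommGroup N] [Module R N]

theorem smul_quotient_tensor_eq_zero {I J : Ideal R} (hJI : J ^ 2 ≤ I) {F : Type*}
    [AddCommGroup F] [Module R F] {W : Submodule R F} (hW : W ≤ J • ⊤)
    (hinj : Function.Injective (W.subtype.lTensor (R ⧸ I))) {r : R} (hr : r ∈ J)
    (z : (R ⧸ I) ⊗[R] W) : r • z = 0 := by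
  have hrs {s : R} (hs : s ∈ J) (x : R ⧸ I) : (r * s) • x = 0 := by
    obtain ⟨a, rfl⟩ := Ideal.Quotient.mk_surjective x
    refine Ideal.Quotient.eq_zero_iff_mem.2 (I.mul_mem_right a (hJI ?_))
    rw [pow_two]
    exact Ideal.mul_mem_mul hr hs
  have hrw (x : R ⧸ I) {w : F} (hw : w ∈ J • (⊤ : Submodule R F)) : r • x ⊗ₜ[R] w = 0 := by
    induction hw using Submodule.smul_induction_on' with
    | smul s hs w _ => rw [tmul_smul, smul_smul, smul_tmul', hrs hs, zero_tmul]
    | add w _ w' _ hw hw' => rw [tmul_add, smul_add, hw, hw', add_zero]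
  induction z with
  | zero => exact smul_zero r
  | add z z' hz hz' => rw [smul_add, hz, hz', add_zero]
  | tmul x w =>
    apply hinj
    rw [map_zero, map_smul, LinearMap.lTensor_tmul, Submodule.subtype_apply, hrw x (hW w.2)]

variable (R M) in
theorem exists_isShortExact_finite_free [IsNoetherianRing R] [Module.Finite R M] :
    ∃ (K F : Type u) (_ : AddCommGroup K) (_ : Module R K) (_ : AddCommGroup F) (_ : Module R F)
      (f : K →ₗ[R] F) (g : F →ₗ[R] M),
      Module.Finite R K ∧ Module.Finite R F ∧ Module.Free R F ∧ IsShortExact f g := by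
  obtain ⟨n, g, hg⟩ := Module.Finite.exists_fin' R M
  exact ⟨LinearMap.ker g, Fin n → R, inferInstance, inferInstance, inferInstance, inferInstance,
    _, g, inferInstance, inferInstance, inferInstance, isShortExact_subtype_ker hg⟩

theorem TorSuccVanish.exists_finite_syzygy [IsNoetherianRing R] [Module.Finite R M] (p : ℕ) :
    ∃ (Z : Type u) (_ : AddCommGroup Z) (_ : Module R Z), Module.Finite R Z ∧
      ∀ (N : Type u) [AddCommGroup N] [Module R N] (i : ℕ),
        TorSuccVanish R Z N i ↔ TorSuccVanish R M N (i + p) := by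
  induction p with
  | zero => exact ⟨M, _, _, inferInstance, fun N _ _ i => Iff.rfl⟩
  | succ p ih =>
    obtain ⟨Z, _, _, _, hZ⟩ := ih
    obtain ⟨K, F, _, _, _, _, f, g, _, _, _, hfg⟩ := exists_isShortExact_finite_free R Z
    refine ⟨K, inferInstance, inferInstance, inferInstance, fun N _ _ i => ?_⟩
    rw [← succ_iff_left hfg, hZ, add_right_comm, add_assoc]

variable [IsLocalRing R]

theorem FlatDimLE.of_residueField [IsNoetherianRing R] [Module.Finite R N] {j : ℕ}
    (h : TorSuccVanish R (ResidueField R) N j) : FlatDimLE R N j := by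
  intro Y _ _ i hi
  induction j generalizing N i with
  | zero =>
    obtain ⟨K, F, _, _, _, _, f, g, _, _, _, hfg⟩ := exists_isShortExact_finite_free R N
    have := Module.free_of_lTensor_residueField_injective f g hfg.surjective hfg.exact
      ((TorSuccVanish.zero_iff_lTensor_injective hfg).1 h)
    exact TorSuccVanish.of_flat_left i
  | succ j ih =>
    obtain ⟨K, F, _, _, _, _, f, g, _, _, _, hfg⟩ := exists_isShortExact_finite_free R N
    obtain ⟨i, rfl⟩ := Nat.exists_eq_add_one_of_ne_zero (by lia : i ≠ 0)
    rw [TorSuccVanish.succ_iff_right hfg] at h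
    rw [TorSuccVanish.succ_iff_left hfg]
    exact ih h i (by lia)

theorem exists_leftInverse_residueField {Y : Type*} [AddCommGroup Y] [Module R Y] [Nontrivial Y]
    (h : ∀ r ∈ maximalIdeal R, ∀ y : Y, r • y = 0) :
    ∃ (s : ResidueField R →ₗ[R] Y) (t : Y →ₗ[R] ResidueField R), Function.LeftInverse t s := by
  have htors : Module.IsTorsionBySet R Y (maximalIdeal R : Set R) := fun y a => h a a.2 y
  let : Module (ResidueField R) Y := htors.module
  have : IsScalarTower R (ResidueField R) Y := htors.isScalarTower
  obtain ⟨y, hy⟩ := exists_ne (0 : Y)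
  let s := LinearMap.toSpanSingleton (ResidueField R) Y y
  obtain ⟨t, hts⟩ := LinearMap.exists_leftInverse_of_injective s
    (LinearMap.ker_toSpanSingleton _ hy)
  exact ⟨s.restrictScalars R, t.restrictScalars R, LinearMap.congr_fun hts⟩

theorem FlatDimLE.of_smul_eq_zero [IsNoetherianRing R] [Module.Finite R N] {Y : Type u}
    [AddCommGroup Y] [Module R Y] [Nontrivial Y] (hY : ∀ r ∈ maximalIdeal R, ∀ y : Y, r • y = 0)
    {j : ℕ} (h : TorSuccVanish R Y N j) : FlatDimLE R N j := by
  obtain ⟨s, t, hts⟩ := exists_leftInverse_residueField hY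
  exact of_residueField (TorSuccVanish.of_leftInverse hts h)

theorem nontrivial_quotient_tensor {I : Ideal R} (hI : I ≤ maximalIdeal R) [Module.Finite R M]
    [Nontrivial M] : Nontrivial ((R ⧸ I) ⊗[R] M) := by
  have hk : Nontrivial (ResidueField R ⊗[R] M) := by
    rw [← not_subsingleton_iff_nontrivial, IsLocalRing.subsingleton_tensorProduct]
    exact not_subsingleton M
  let q : (R ⧸ I) →ₗ[R] ResidueField R := Submodule.factor hI
  exact (LinearMap.rTensor_surjective M (g := q) (Submodule.factor_surjective hI)).nontrivial

theorem exists_minimal_cover [Module.Finite R M] :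
    ∃ (ι : Type u) (_ : Finite ι) (g : (ι → R) →ₗ[R] M),
      Function.Surjective g ∧ LinearMap.ker g ≤ maximalIdeal R • ⊤ := by
  let b := Module.Free.chooseBasis (ResidueField R) (ResidueField R ⊗[R] M)
  obtain ⟨v, hv⟩ := (TensorProduct.mk_surjective R M (ResidueField R)
    Ideal.Quotient.mk_surjective).comp_left b
  replace hv (i) : (1 : ResidueField R) ⊗ₜ[R] v i = b i := congrFun hv i
  refine ⟨_, inferInstance, Fintype.linearCombination R v, ?_, fun c hc => ?_⟩
  · rw [← LinearMap.range_eq_top, Fintype.range_linearCombination]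
    exact IsLocalRing.span_eq_top_of_tmul_eq_basis v b hv
  · have hsum : ∑ i, residue R (c i) • b i = 0 :=
      calc ∑ i, residue R (c i) • b i = 1 ⊗ₜ[R] ∑ i, c i • v i := by
            simp only [tmul_sum, tmul_smul, hv]
            rfl
        _ = 0 := by rw [← Fintype.linearCombination_apply, LinearMap.mem_ker.1 hc, tmul_zero]
    rw [pi_eq_sum_univ' c]
    refine Submodule.sum_mem _ fun i _ => Submodule.smul_mem_smul ?_ Submodule.mem_top
    exact (residue_eq_zero_iff _).1 (Fintype.linearIndependent_iff.1 b.linearIndependent _ hsum i)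

namespace TorSuccVanish

variable [IsNoetherianRing R] [Module.Finite R M] [Module.Finite R N] {I : Ideal R} {d n : ℕ}

/-- If `W` is the first syzygy of `M` in a minimal cover, then `R/I ⊗ W` is a vector space over
the residue field, to which the vanishing of `Tor(W, N)` is transferred along a flat resolution of
`R/I`. -/
theorem of_forall_quotient (hsq : maximalIdeal R ^ 2 ≤ I) (hIm : I ≤ maximalIdeal R)
    (hI : FlatDimLE R (R ⧸ I) d) (hIM : ∀ i, TorSuccVanish R (R ⧸ I) M i)
    (h : ∀ j, n + 1 ≤ j → j ≤ n + d + 1 → TorSuccVanish R M N j) {j : ℕ} (hj : n + d + 1 ≤ j) :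
    TorSuccVanish R M N j := by
  obtain ⟨ι, _, g, hg, hgm⟩ := exists_minimal_cover (R := R) (M := M)
  have hs := isShortExact_subtype_ker hg
  obtain ⟨j, rfl⟩ := Nat.exists_eq_add_one_of_ne_zero (by lia : j ≠ 0)
  rw [succ_iff_left hs]
  rcases subsingleton_or_nontrivial (LinearMap.ker g) with _ | _
  · exact of_flat_left j
  have hIW (i : ℕ) : TorSuccVanish R (R ⧸ I) (LinearMap.ker g) i :=
    (succ_iff_right hs i).1 (hIM (i + 1))
  have hIWN : TorSuccVanish R ((R ⧸ I) ⊗[R] LinearMap.ker g) N (n + d) :=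
    tensor_of_flatDimLE hI hIW fun i hni hid =>
      (succ_iff_left hs i).1 (h _ (by lia) (by lia))
  have hkill (r : R) (hr : r ∈ maximalIdeal R) (z : (R ⧸ I) ⊗[R] LinearMap.ker g) : r • z = 0 :=
    smul_quotient_tensor_eq_zero hsq hgm ((zero_iff_lTensor_injective hs).1 (hIM 0)) hr z
  have := nontrivial_quotient_tensor (M := LinearMap.ker g) hIm
  exact TorSuccVanish.comm.1 (FlatDimLE.of_smul_eq_zero hkill hIWN _ j (by lia))

theorem of_forall_quotient_add (hsq : maximalIdeal R ^ 2 ≤ I) (hIm : I ≤ maximalIdeal R)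
    (hI : FlatDimLE R (R ⧸ I) d) {p : ℕ} (hIM : ∀ i, TorSuccVanish R (R ⧸ I) M (i + p))
    (h : ∀ j, n + p + 1 ≤ j → j ≤ n + p + d + 1 → TorSuccVanish R M N j) {j : ℕ}
    (hj : n + p + d + 1 ≤ j) : TorSuccVanish R M N j := by
  obtain ⟨Z, _, _, _, hZ⟩ := exists_finite_syzygy (R := R) (M := M) p
  obtain ⟨j, rfl⟩ := Nat.exists_eq_add_of_le' (by lia : p ≤ j)
  rw [← hZ]
  refine of_forall_quotient (n := n) hsq hIm hI (fun i => ?_) (fun i hni hid => ?_) (by lia)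
  · rw [TorSuccVanish.comm, hZ, TorSuccVanish.comm]
    exact hIM i
  · exact (hZ N i).2 (h _ (by lia) (by lia))

open RingTheory.Sequence in
theorem of_isWeaklyRegular_of_sq_le {xs ys : List R} (hxm : ∀ x ∈ xs, x ∈ maximalIdeal R)
    (hxs : IsWeaklyRegular R xs) (hsq : maximalIdeal R ^ 2 ≤ Ideal.ofList xs)
    (hym : ∀ y ∈ ys, y ∈ maximalIdeal R) (hys : IsWeaklyRegular M ys) {p : ℕ}
    (hp : xs.length ≤ p + ys.length)
    (h : ∀ j, n + p + 1 ≤ j → j ≤ n + p + xs.length + 1 → TorSuccVanish R M N j) {j : ℕ}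
    (hj : n + p + xs.length + 1 ≤ j) : TorSuccVanish R M N j := by
  have hxd := FlatDimLE.quotient_ofList hxs
  refine of_forall_quotient_add hsq (Ideal.span_le.2 hxm) hxd (fun i => ?_) h hj
  rw [TorSuccVanish.comm]
  refine of_isWeaklyRegular hys (k := 2) (fun y hy x => ?_) hxd (by lia)
  obtain ⟨a, rfl⟩ := Ideal.Quotient.mk_surjective x
  exact Ideal.Quotient.eq_zero_iff_mem.2
    (Ideal.mul_mem_right a _ (hsq (Ideal.pow_mem_pow (hym y hy) 2)))

end TorSuccVanish

end LocalRing

section ChangeOfRings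

variable {R : Type u} [CommRing R] {S : Type u} [CommRing S] [Algebra R S]
  {M : Type u} [AddCommGroup M] [Module R M] [Module S M] [IsScalarTower R S M]

section BaseChange

variable {X : Type u} [AddCommGroup X] [Module R X] {Y : Type u} [AddCommGroup Y] [Module R Y]
  {Z : Type u} [AddCommGroup Z] [Module R Z]

theorem IsShortExact.baseChange [Module.Flat R Y] {p : X →ₗ[R] Y} {q : Y →ₗ[R] Z}
    (h : IsShortExact p q) (hZ : TorSuccVanish R S Z 0) :
    IsShortExact (p.baseChange S) (q.baseChange S) where
  injective := (TorSuccVanish.zero_iff_lTensor_injective h).1 hZ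
  exact := lTensor_exact S h.exact h.surjective
  surjective := LinearMap.lTensor_surjective S h.surjective

theorem lTensor_baseChange_injective_iff (p : X →ₗ[R] Y) :
    Function.Injective ((p.baseChange S).lTensor M) ↔ Function.Injective (p.lTensor M) := by
  let eX := AlgebraTensorModule.cancelBaseChange R S S M X
  let eY := AlgebraTensorModule.cancelBaseChange R S S M Y
  have hcomm : eY.toLinearMap ∘ₗ (p.baseChange S).lTensor M =
      AlgebraTensorModule.lTensor S M p ∘ₗ eX.toLinearMap := by
    ext m x
    simp [eX, eY]
  have hfun : eY ∘ (p.baseChange S).lTensor M = p.lTensor M ∘ eX :=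
    funext (LinearMap.congr_fun hcomm)
  rw [← eY.injective.of_comp_iff, hfun, Function.Injective.of_comp_iff' _ eX.bijective]

theorem TorSuccVanish.baseChange_iff (h : ∀ j, TorSuccVanish R S Z j) (j : ℕ) :
    TorSuccVanish S M (S ⊗[R] Z) j ↔ TorSuccVanish R M Z j := by
  induction j generalizing Z with
  | zero =>
    have hZ := isShortExact_freeCover R Z
    rw [zero_iff_lTensor_injective (hZ.baseChange (h 0)), zero_iff_lTensor_injective hZ,
      lTensor_baseChange_injective_iff]
  | succ j ih =>
    have hZ := isShortExact_freeCover R Z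
    rw [succ_iff_right (hZ.baseChange (h 0)), succ_iff_right hZ]
    exact ih fun j => h (j + 1)

theorem exact_syzygy_incl_baseChange_freeCover_proj (S : Type u) [CommRing S] [Algebra R S] :
    Function.Exact ((Syzygy.incl R Z).baseChange S) ((FreeCover.proj R Z).baseChange S) :=
  lTensor_exact S (isShortExact_freeCover R Z).exact (isShortExact_freeCover R Z).surjective

theorem freeCover_proj_baseChange_surjective (S : Type u) [CommRing S] [Algebra R S] :
    Function.Surjective ((FreeCover.proj R Z).baseChange S) :=
  LinearMap.lTensor_surjective S (isShortExact_freeCover R Z).surjective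

theorem TorSuccVanish.iff_of_bijective_algebraMap {N : Type u} [AddCommGroup N] [Module R N]
    [Module S N] [IsScalarTower R S N] (hb : Function.Bijective (algebraMap R S)) (i : ℕ) :
    TorSuccVanish S M N i ↔ TorSuccVanish R M N i := by
  have := CompatibleSMul.of_algebraMap_surjective (R := R) (A := S) S N hb.surjective
  have : Module.Flat R S :=
    Module.Flat.of_linearEquiv (LinearEquiv.ofBijective (Algebra.linearMap R S) hb).symm
  rw [← congr_right (lidOfCompatibleSMul R S N), baseChange_iff of_flat_left]

end BaseChange

section RegularQuotient

variable {f : R} {K : Type u} [AddCommGroup K] [Module R K]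

theorem isSMulRegular_freeCover {K : Type u} (hf : IsSMulRegular R f) :
    IsSMulRegular (FreeCover R K) f :=
  hf.finsupp

theorem isSMulRegular_syzygy (hf : IsSMulRegular R f) : IsSMulRegular (Syzygy R K) f :=
  (isSMulRegular_freeCover hf).of_injective (Syzygy.incl R K) (isShortExact_freeCover R K).injective

variable (hs : IsShortExact (LinearMap.lsmul R R f) (Algebra.linearMap R S))

include hs

theorem TorSuccVanish.algebra_left_of_isSMulRegular (hK : IsSMulRegular K f) (j : ℕ) :
    TorSuccVanish R S K j := by
  cases j with
  | zero => exact zero_of_rTensor_injective hs (of_flat_left _) (hK.lTensor R)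
  | succ j => exact cokernel_left hs (of_flat_left _) (of_flat_left _)

theorem TorSuccVanish.baseChange_syzygy_iff (i : ℕ) :
    TorSuccVanish S M (S ⊗[R] Syzygy R K) i ↔ TorSuccVanish R M K (i + 1) :=
  baseChange_iff (algebra_left_of_isSMulRegular hs (isSMulRegular_syzygy hs.injective)) i

theorem exists_eq_smul_of_one_tmul_eq_zero {k : K} (h : (1 : S) ⊗ₜ[R] k = 0) :
    ∃ k', k = f • k' := by
  obtain ⟨z, hz⟩ := (rTensor_exact K hs.exact hs.surjective ((1 : R) ⊗ₜ k)).1 (by simpa using h)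
  refine ⟨TensorProduct.lid R K z, ?_⟩
  have hz' : f • z = 1 ⊗ₜ k := hz
  rw [← map_smul, hz', TensorProduct.lid_tmul, one_smul]

theorem smul_eq_zero_of_isShortExact_lsmul [Module S K] [IsScalarTower R S K] (k : K) :
    f • k = 0 := by
  have hf : algebraMap R S f = 0 := (hs.exact f).2 ⟨1, mul_one f⟩
  rw [← algebraMap_smul S f k, hf, zero_smul]

/-- Reducing a matrix factorization of the regular element `f` modulo `f` gives exact maps. -/
theorem exact_baseChange_of_comp_eq_smul {A B : Type u} [AddCommGroup A] [Module R A]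
    [AddCommGroup B] [Module R B] {α : A →ₗ[R] B} {β : B →ₗ[R] A} (hB : IsSMulRegular B f)
    (hαβ : α ∘ₗ β = f • LinearMap.id) (hβα : β ∘ₗ α = f • LinearMap.id) :
    Function.Exact (α.baseChange S) (β.baseChange S) := by
  have hβ : Function.Injective β := by
    have h : Function.Injective (α ∘ₗ β) := hαβ ▸ hB
    exact Function.Injective.of_comp h
  have hzero : β.baseChange S ∘ₗ α.baseChange S = 0 := by
    rw [← LinearMap.baseChange_comp, hβα, LinearMap.baseChange_smul, LinearMap.baseChange_id]
    exact LinearMap.ext fun z => smul_eq_zero_of_isShortExact_lsmul hs z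
  refine fun z => ⟨fun hz => ?_, fun ⟨a, ha⟩ => ha ▸ LinearMap.congr_fun hzero a⟩
  obtain ⟨b, rfl⟩ := TensorProduct.mk_surjective R B S hs.surjective z
  rw [TensorProduct.mk_apply, LinearMap.baseChange_tmul] at hz
  obtain ⟨a, ha⟩ := exists_eq_smul_of_one_tmul_eq_zero hs hz
  have hb : α a = b := hβ (by rw [ha, ← LinearMap.comp_apply, hβα]; rfl)
  exact ⟨1 ⊗ₜ a, by rw [LinearMap.baseChange_tmul, hb, TensorProduct.mk_apply]⟩

variable {N : Type u} [AddCommGroup N] [Module R N] [Module S N] [IsScalarTower R S N]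

theorem nonempty_linearEquiv_ker_syzygy_incl_baseChange :
    Nonempty (N ≃ₗ[S] LinearMap.ker ((Syzygy.incl R N).baseChange S)) := by
  have := CompatibleSMul.of_algebraMap_surjective (R := R) (A := S) S N hs.surjective
  obtain ⟨φ, hφ, hφ'⟩ := Syzygy.exists_comp_eq_smul_of_smul_eq_zero
    (smul_eq_zero_of_isShortExact_lsmul hs (K := N))
  obtain ⟨q, hexact, hsurj, -⟩ := exists_exact_surjective_subtype_ker_comp_eq
    (exact_baseChange_of_comp_eq_smul hs (isSMulRegular_freeCover hs.injective) hφ hφ')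
    (exact_baseChange_of_comp_eq_smul hs (isSMulRegular_syzygy hs.injective) hφ' hφ)
  have hproj := exact_syzygy_incl_baseChange_freeCover_proj (R := R) (Z := N) S
  have e := hproj.linearEquivOfSurjective (freeCover_proj_baseChange_surjective S)
  have e' := Function.Exact.linearEquivOfSurjective
    (P := LinearMap.ker ((Syzygy.incl R N).baseChange S)) hexact hsurj
  exact ⟨(lidOfCompatibleSMul R S N).symm ≪≫ₗ e.symm ≪≫ₗ e'⟩

/-- As `f` annihilates `N`, the first `S`-syzygy of `N` is presented by the `R`-syzygy reduced
modulo `f`, and the kernel `Tor₁^R(S, N)` of the reduction is `N` itself. -/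
theorem exists_isShortExact_syzygy_baseChange :
    ∃ (j : N →ₗ[S] S ⊗[R] Syzygy R N)
      (r : S ⊗[R] Syzygy R N →ₗ[S] LinearMap.ker ((FreeCover.proj R N).baseChange S)),
      IsShortExact (C := LinearMap.ker ((FreeCover.proj R N).baseChange S)) j r := by
  obtain ⟨e⟩ := nonempty_linearEquiv_ker_syzygy_incl_baseChange hs (N := N)
  let j : N →ₗ[S] S ⊗[R] Syzygy R N :=
    (LinearMap.ker ((Syzygy.incl R N).baseChange S)).subtype ∘ₗ e.toLinearMap
  have hj : Function.Exact j ((Syzygy.incl R N).baseChange S) :=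
    e.surjective.comp_exact_iff_exact.2 (LinearMap.exact_subtype_ker_map _)
  obtain ⟨r, hexact, hsurj, -⟩ := exists_exact_surjective_subtype_ker_comp_eq hj
    (exact_syzygy_incl_baseChange_freeCover_proj S)
  exact ⟨j, r, Subtype.val_injective.comp e.injective, hexact, hsurj⟩

omit [Module R M] [IsScalarTower R S M] in
theorem TorSuccVanish.ker_freeCover_proj_baseChange_iff (i : ℕ) :
    TorSuccVanish S M (LinearMap.ker ((FreeCover.proj R N).baseChange S)) i ↔
      TorSuccVanish S M N (i + 1) := by
  have := CompatibleSMul.of_algebraMap_surjective (R := R) (A := S) S N hs.surjective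
  rw [← succ_iff_right (isShortExact_subtype_ker (freeCover_proj_baseChange_surjective S)),
    congr_right (lidOfCompatibleSMul R S N)]

theorem TorSuccVanish.restrictScalars (i : ℕ) (h : TorSuccVanish S M N i)
    (h' : TorSuccVanish S M N (i + 1)) : TorSuccVanish R M N (i + 1) := by
  obtain ⟨j, r, hjr⟩ := exists_isShortExact_syzygy_baseChange hs (N := N)
  rw [← baseChange_syzygy_iff hs]
  exact extension_right hjr h ((ker_freeCover_proj_baseChange_iff hs i).2 h')

theorem TorSuccVanish.of_restrictScalars (i : ℕ) (h : TorSuccVanish R M N (i + 2))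
    (h' : TorSuccVanish S M N i) : TorSuccVanish S M N (i + 2) := by
  obtain ⟨j, r, hjr⟩ := exists_isShortExact_syzygy_baseChange hs (N := N)
  rw [← baseChange_syzygy_iff hs] at h
  exact (ker_freeCover_proj_baseChange_iff hs (i + 1)).1 (cokernel_right hjr h h')

end RegularQuotient

end ChangeOfRings

section RegularSequence

open RingTheory.Sequence

/-- Vanishing of `Tor(M, N)` over `S` and over `R` determine each other up to a shift by `c`, in
the form that holds when `S` is the quotient of `R` by a regular sequence of length `c`. The
indices are those of `TorSuccVanish`. -/
structure TorVanishingShift (R S : Type u) [CommRing R] [CommRing S]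
    (M : Type u) [AddCommGroup M] [Module R M] [Module S M]
    (N : Type u) [AddCommGroup N] [Module R N] [Module S N] (c : ℕ) : Prop where
  restrictScalars : ∀ a b, (∀ i, a ≤ i → i ≤ b → TorSuccVanish S M N i) →
    ∀ i, a + c ≤ i → i ≤ b → TorSuccVanish R M N i
  of_restrictScalars : ∀ a, (∀ i, a + c ≤ i → TorSuccVanish R M N i) →
    (∀ i, a ≤ i → i ≤ a + c → TorSuccVanish S M N i) → ∀ i, a ≤ i → TorSuccVanish S M N i

variable {R : Type u} [CommRing R] {S : Type u} [CommRing S]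
  {M : Type u} [AddCommGroup M] [Module R M] [Module S M]
  {N : Type u} [AddCommGroup N] [Module R N] [Module S N]

namespace TorVanishingShift

theorem of_bijective_algebraMap [Algebra R S] [IsScalarTower R S M] [IsScalarTower R S N]
    (hb : Function.Bijective (algebraMap R S)) : TorVanishingShift R S M N 0 where
  restrictScalars _ _ h i hai hib :=
    (TorSuccVanish.iff_of_bijective_algebraMap hb i).1 (h i hai hib)
  of_restrictScalars _ h _ i hai := (TorSuccVanish.iff_of_bijective_algebraMap hb i).2 (h i hai)

theorem of_isShortExact_lsmul [Algebra R S] [IsScalarTower R S M] [IsScalarTower R S N] {f : R}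
    (hs : IsShortExact (LinearMap.lsmul R R f) (Algebra.linearMap R S)) :
    TorVanishingShift R S M N 1 where
  restrictScalars a b h i hai hib := by
    obtain ⟨i, rfl⟩ := Nat.exists_eq_add_of_lt (show a < i from hai)
    exact TorSuccVanish.restrictScalars hs _ (h _ (by lia) (by lia)) (h _ (by lia) hib)
  of_restrictScalars a hR hS i hai := by
    induction i using Nat.strong_induction_on with
    | h i ih =>
      obtain hia | hia := le_or_gt i (a + 1)
      · exact hS i hai hia
      · obtain ⟨i, rfl⟩ := Nat.exists_eq_add_of_le' (show 2 ≤ i by lia)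
        exact TorSuccVanish.of_restrictScalars hs i (hR _ hia.le) (ih i (by lia) (by lia))

theorem trans {R' : Type u} [CommRing R'] [Module R' M] [Module R' N] {c c' : ℕ}
    (h : TorVanishingShift R R' M N c) (h' : TorVanishingShift R' S M N c') :
    TorVanishingShift R S M N (c + c') where
  restrictScalars a b hS i hai hib :=
    h.restrictScalars (a + c') b (h'.restrictScalars a b hS) i (by lia) hib
  of_restrictScalars a hR hS := by
    refine h'.of_restrictScalars a ?_ fun i hai hib => hS i hai (by lia)
    exact h.of_restrictScalars (a + c') (fun i hi => hR i (by lia))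
      fun i hai hib => h'.restrictScalars a (a + (c + c')) hS i hai (by lia)

end TorVanishingShift

theorem isShortExact_lsmul_quotient_span {f : R} (hf : IsSMulRegular R f) :
    IsShortExact (LinearMap.lsmul R R f) (Algebra.linearMap R (R ⧸ Ideal.span {f})) where
  injective := hf
  exact r := by
    rw [Algebra.linearMap_apply, Ideal.Quotient.algebraMap_eq, Ideal.Quotient.eq_zero_iff_mem,
      Ideal.mem_span_singleton]
    exact exists_congr fun _ => eq_comm
  surjective := Ideal.Quotient.mk_surjective

theorem isWeaklyRegular_cons_self_iff {f : R} {fs : List R} : IsWeaklyRegular R (f :: fs) ↔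
    IsSMulRegular R f ∧ IsWeaklyRegular (R ⧸ Ideal.span {f})
      (fs.map (Ideal.Quotient.mk (Ideal.span {f}))) := by
  let e : QuotSMulTop f R ≃ₗ[R] R ⧸ Ideal.span {f} := Submodule.quotEquivOfEq _ _ <| by
    rw [← Submodule.ideal_span_singleton_smul, smul_eq_mul, Ideal.mul_top]
  rw [isWeaklyRegular_cons_iff',
    (e.extendScalarsOfSurjective Ideal.Quotient.mk_surjective).isWeaklyRegular_congr]

theorem ker_quotient_lift_span_singleton {f : R} {fs : List R} {φ : R →+* S}
    (hker : RingHom.ker φ = Ideal.ofList (f :: fs)) (hle : Ideal.span {f} ≤ RingHom.ker φ) :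
    RingHom.ker (Ideal.Quotient.lift (Ideal.span {f}) φ hle) =
      Ideal.ofList (fs.map (Ideal.Quotient.mk (Ideal.span {f}))) := by
  rw [Ideal.ker_quotient_lift, hker, Ideal.ofList_cons, Ideal.map_sup, Ideal.map_quotient_self,
    bot_sup_eq, Ideal.map_ofList]

theorem TorVanishingShift.of_isWeaklyRegular [Algebra R S] [IsScalarTower R S M]
    [IsScalarTower R S N] {fs : List R} (hfs : IsWeaklyRegular R fs)
    (hsurj : Function.Surjective (algebraMap R S))
    (hker : RingHom.ker (algebraMap R S) = Ideal.ofList fs) :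
    TorVanishingShift R S M N fs.length := by
  induction hc : fs.length generalizing R with
  | zero =>
    rw [List.length_eq_zero_iff.1 hc, Ideal.ofList_nil] at hker
    exact of_bijective_algebraMap ⟨(RingHom.injective_iff_ker_eq_bot _).2 hker, hsurj⟩
  | succ c ih =>
    obtain ⟨f, fs, rfl⟩ := List.exists_cons_of_length_eq_add_one hc
    obtain ⟨hf, hfs⟩ := isWeaklyRegular_cons_self_iff.1 hfs
    have hle : Ideal.span {f} ≤ RingHom.ker (algebraMap R S) := by
      rw [hker, Ideal.ofList_cons]
      exact le_sup_left
    let R' := R ⧸ Ideal.span {f}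
    let φ : R' →+* S := Ideal.Quotient.lift _ (algebraMap R S) hle
    let : Algebra R' S := φ.toAlgebra
    let : Module R' M := Module.compHom M φ
    let : Module R' N := Module.compHom N φ
    have : IsScalarTower R' S M := .of_algebraMap_smul fun _ _ => rfl
    have : IsScalarTower R' S N := .of_algebraMap_smul fun _ _ => rfl
    have : IsScalarTower R R' M := .of_algebraMap_smul (algebraMap_smul S (M := M))
    have : IsScalarTower R R' N := .of_algebraMap_smul (algebraMap_smul S (M := N))
    rw [add_comm]
    exact trans (of_isShortExact_lsmul (isShortExact_lsmul_quotient_span hf))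
      (ih hfs (Ideal.Quotient.lift_surjective_of_surjective _ hle hsurj)
        (ker_quotient_lift_span_singleton hker hle) (by simpa using hc))

end RegularSequence

section Deformation

open RingTheory.Sequence

theorem TorVanishingShift.vanishing_of_isWeaklyRegular_of_sq_le {R : Type u} [CommRing R]
    [IsNoetherianRing R] [IsLocalRing R] {S : Type u} [CommRing S]
    {M : Type u} [AddCommGroup M] [Module R M] [Module.Finite R M] [Module S M]
    {N : Type u} [AddCommGroup N] [Module R N] [Module.Finite R N] [Module S N] {c : ℕ}
    (hRS : TorVanishingShift R S M N c) {xs ys : List R} (hxm : ∀ x ∈ xs, x ∈ maximalIdeal R)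
    (hxs : IsWeaklyRegular R xs) (hsq : maximalIdeal R ^ 2 ≤ Ideal.ofList xs)
    (hym : ∀ y ∈ ys, y ∈ maximalIdeal R) (hys : IsWeaklyRegular M ys) {e n : ℕ}
    (he : xs.length ≤ c + e + ys.length)
    (h : ∀ i, n ≤ i → i ≤ n + (xs.length + c + e + 1) → TorSuccVanish S M N i) :
    ∀ i, n ≤ i → TorSuccVanish S M N i := by
  have hwindow := hRS.restrictScalars _ _ h
  have htail : ∀ i, n + (c + e) + xs.length + 1 ≤ i → TorSuccVanish R M N i := fun i =>
    TorSuccVanish.of_isWeaklyRegular_of_sq_le hxm hxs hsq hym hys he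
      fun j hnj hj => hwindow j (by lia) (by lia)
  have hR : ∀ i, n + c ≤ i → TorSuccVanish R M N i := fun i hi =>
    (le_or_gt i (n + (xs.length + c + e + 1))).elim (hwindow i hi) fun hi' => htail i (by lia)
  exact hRS.of_restrictScalars n hR fun i hni hi => h i hni (by lia)

theorem exists_isWeaklyRegular_of_le_depth {R : Type} [CommRing R] [IsLocalRing R] {M : Type}
    [AddCommGroup M] [Module R M] {t : ℕ} (ht : (t : ℕ∞) ≤ depth R M) :
    ∃ rs : List R, (∀ r ∈ rs, r ∈ maximalIdeal R) ∧ IsWeaklyRegular M rs ∧ t ≤ rs.length := by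
  cases t with
  | zero => exact ⟨[], by simp, IsWeaklyRegular.nil R M, Nat.zero_le _⟩
  | succ t =>
    obtain ⟨-, ⟨rs, hmem, hreg, rfl⟩, hlt⟩ := lt_sSup_iff.1 <|
      lt_of_lt_of_le (ENat.natCast_lt_natCast.2 t.lt_succ_self) ht
    exact ⟨rs, hmem, hreg.toIsWeaklyRegular, ENat.natCast_lt_natCast.1 hlt⟩

theorem exists_isWeaklyRegular_map_eq {R S : Type*} [CommRing R] [IsLocalRing R] [CommRing S]
    [IsLocalRing S] [Algebra R S] {M : Type*} [AddCommGroup M] [Module R M] [Module S M]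
    [IsScalarTower R S M] (hsurj : Function.Surjective (algebraMap R S)) {rs : List S}
    (hmem : ∀ r ∈ rs, r ∈ maximalIdeal S) (hreg : IsWeaklyRegular M rs) :
    ∃ ys : List R, ys.map (algebraMap R S) = rs ∧ (∀ y ∈ ys, y ∈ maximalIdeal R) ∧
      IsWeaklyRegular M ys := by
  obtain ⟨ys, rfl⟩ := List.map_surjective_iff.2 hsurj rs
  refine ⟨ys, rfl, fun y hy hunit => ?_, (isWeaklyRegular_map_algebraMap_iff S M ys).1 hreg⟩
  exact hmem _ (List.mem_map_of_mem hy) (hunit.map (algebraMap R S))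

theorem ringKrullDim_quotient_add_length {R : Type*} [CommRing R] [IsNoetherianRing R]
    [IsLocalRing R] {fs : List R} (hmem : ∀ f ∈ fs, f ∈ maximalIdeal R)
    (hreg : IsWeaklyRegular R fs) :
    ringKrullDim (R ⧸ Ideal.ofList fs) + fs.length = ringKrullDim R :=
  ringKrullDim_add_length_eq_ringKrullDim_of_isRegular fs <|
    (isRegular_iff_isWeaklyRegular_of_subset_maximalIdeal hmem).2 hreg

end Deformation

theorem statement18 (R : Type) [CommRing R] [IsNoetherianRing R] [IsLocalRing R]
    (d : ℕ) (hdim : ringKrullDim R = (d : WithBot ℕ∞)) (hCM : depth R R = (d : ℕ∞))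
    (hmin : HasMinimalMultiplicity R d)
    (c : ℕ) (fs : List R) (hlen : fs.length = c) (hmem : ∀ x ∈ fs, x ∈ maximalIdeal R)
    (hreg : RingTheory.Sequence.IsWeaklyRegular R fs)
    [IsLocalRing (R ⧸ Ideal.ofList fs)]
    (M : Type) [AddCommGroup M] [Module (R ⧸ Ideal.ofList fs) M]
    [Module.Finite (R ⧸ Ideal.ofList fs) M]
    (dS tS : ℕ) (hdS : ringKrullDim (R ⧸ Ideal.ofList fs) = (dS : WithBot ℕ∞))
    (htS : depth (R ⧸ Ideal.ofList fs) M = (tS : ℕ∞)) :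
    ∀ (N : ModuleCat (R ⧸ Ideal.ofList fs)), Module.Finite (R ⧸ Ideal.ofList fs) N →
      ∀ n : ℕ, 1 ≤ n →
      (∀ i : ℕ, n ≤ i → i ≤ n + (d + c + (dS - tS) + 1) →
        TorVanish (R ⧸ Ideal.ofList fs) M N i) →
      ∀ i : ℕ, n ≤ i → TorVanish (R ⧸ Ideal.ofList fs) M N i := by
  intro N _ n hn hT i hi
  obtain ⟨n, rfl⟩ := Nat.exists_eq_add_of_le' hn
  obtain ⟨i, rfl⟩ := Nat.exists_eq_add_of_le' (hn.trans hi)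
  let S := R ⧸ Ideal.ofList fs
  let : Module R M := Module.compHom M (algebraMap R S)
  let : Module R N := Module.compHom N (algebraMap R S)
  have : IsScalarTower R S M := .of_algebraMap_smul fun _ _ => rfl
  have : IsScalarTower R S N := .of_algebraMap_smul fun _ _ => rfl
  have : Module.Finite R M := .trans S M
  have : Module.Finite R N := .trans S N
  have hsurj : Function.Surjective (algebraMap R S) := Ideal.Quotient.mk_surjective
  have hd : dS + c = d := by
    exact_mod_cast hlen ▸ hdim ▸ hdS ▸ ringKrullDim_quotient_add_length hmem hreg
  obtain ⟨xs, rfl, hxm, hxs, hsq⟩ := hmin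
  obtain ⟨rs, hrm, hrs, htle⟩ := exists_isWeaklyRegular_of_le_depth htS.ge
  obtain ⟨ys, rfl, hym, hys⟩ := exists_isWeaklyRegular_map_eq hsurj hrm hrs
  have hRS : TorVanishingShift R S M N c := hlen ▸ .of_isWeaklyRegular hreg hsurj Ideal.mk_ker
  rw [List.length_map] at htle
  exact torVanish_succ_iff.2 <| hRS.vanishing_of_isWeaklyRegular_of_sq_le hxm hxs
    (hsq ▸ Ideal.mul_le_left) hym hys (e := dS - tS) (n := n) (by lia)
    (fun j hnj hj => torVanish_succ_iff.1 (hT (j + 1) (by lia) (by lia))) i (by lia)
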